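/- arXiv:0712.1208 — 2 statements merged into one kernel-verified Lean document; each statement's English description precedes it below -/
import Mathlib

section
/- Let g : (0,∞) → ℝ be a standard-type function, let D = diag(λ₁,…,λₙ) be a diagonal density matrix with all λᵢ > 0, and let A be a self-adjoint n×n complex matrix. Then qCov^g_D(A,A) ≥ 0, and qCov^g_D(A,A) = 0 if and only if A = (Tr(DA))·I, where I is the n×n identity matrix. -/
open scoped BigOperators

noncomputable section

/-- A standard-type function: continuous, non-decreasing and concave on `(0,∞)`,
positive, with `g 1 = 1` and the symmetry `g t = t * g (1/t)`. -/
def StandardType (g : ℝ → ℝ) : Prop :=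
  ContinuousOn g (Set.Ioi 0) ∧ MonotoneOn g (Set.Ioi 0) ∧
  ConcaveOn ℝ (Set.Ioi 0) g ∧ (∀ t : ℝ, 0 < t → 0 < g t) ∧
  g 1 = 1 ∧ ∀ t : ℝ, 0 < t → g t = t * g (1 / t)

/-- The mean associated to `g`: `M_g(a,b) = b * g (a/b)`. -/
def Mmean (g : ℝ → ℝ) (a b : ℝ) : ℝ := b * g (a / b)

/-! With `m = Tr(DA)`, the parallel axis identity on the diagonal gives
`qCov(A, A) = ∑ i, ∑ j, M i j * ‖(A - m • 1) i j‖ ^ 2`: replacing `A` by `A - m • 1` only moves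
diagonal entries, where `M i i` is the weight `λ i` itself. Strict positivity of `M` makes the
right-hand side a squared norm of `A - m • 1`. -/

open Finset

theorem sum_mul_norm_sub_sum_smul_sq {ι E : Type*} [SeminormedAddCommGroup E]
    [InnerProductSpace ℝ E] (s : Finset ι) (w : ι → ℝ) (hw : ∑ i ∈ s, w i = 1) (x : ι → E) :
    ∑ i ∈ s, w i * ‖x i - ∑ j ∈ s, w j • x j‖ ^ 2 =
      ∑ i ∈ s, w i * ‖x i‖ ^ 2 - ‖∑ i ∈ s, w i • x i‖ ^ 2 := by
  set m := ∑ j ∈ s, w j • x j with hm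
  have sum_inner_mean : ∑ i ∈ s, w i * inner ℝ (x i) m = ‖m‖ ^ 2 := by
    rw [← real_inner_self_eq_norm_sq]
    nth_rw 2 [hm]
    simp only [sum_inner, real_inner_smul_left]
  calc ∑ i ∈ s, w i * ‖x i - m‖ ^ 2
      = ∑ i ∈ s, (w i * ‖x i‖ ^ 2 - 2 * (w i * inner ℝ (x i) m) + w i * ‖m‖ ^ 2) :=
        sum_congr rfl fun i _ ↦ by rw [norm_sub_sq_real]; ring
    _ = ∑ i ∈ s, w i * ‖x i‖ ^ 2 - 2 * ‖m‖ ^ 2 + 1 * ‖m‖ ^ 2 := by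
        rw [sum_add_distrib, sum_sub_distrib, ← mul_sum, ← sum_mul, sum_inner_mean, hw]
    _ = ∑ i ∈ s, w i * ‖x i‖ ^ 2 - ‖m‖ ^ 2 := by ring

theorem sum_sum_mul_norm_sq_nonneg {ι κ E : Type*} [Fintype ι] [Fintype κ]
    [SeminormedAddCommGroup E] {M : Matrix ι κ ℝ} (hM : ∀ i j, 0 ≤ M i j) (B : Matrix ι κ E) :
    0 ≤ ∑ i, ∑ j, M i j * ‖B i j‖ ^ 2 :=
  sum_nonneg fun i _ ↦ sum_nonneg fun j _ ↦ mul_nonneg (hM i j) (sq_nonneg _)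

theorem sum_sum_mul_norm_sq_eq_zero_iff {ι κ E : Type*} [Fintype ι] [Fintype κ]
    [NormedAddCommGroup E] {M : Matrix ι κ ℝ} (hM : ∀ i j, 0 < M i j) {B : Matrix ι κ E} :
    ∑ i, ∑ j, M i j * ‖B i j‖ ^ 2 = 0 ↔ B = 0 := by
  have term_nonneg (i j) : 0 ≤ M i j * ‖B i j‖ ^ 2 := mul_nonneg (hM i j).le (sq_nonneg _)
  rw [Fintype.sum_eq_zero_iff_of_nonneg fun i ↦ sum_nonneg fun j _ ↦ term_nonneg i j, funext_iff,
    ← Matrix.ext_iff]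
  refine forall_congr' fun i ↦ ?_
  rw [Pi.zero_apply, Fintype.sum_eq_zero_iff_of_nonneg (term_nonneg i), funext_iff]
  simp [(hM _ _).ne']

theorem sum_sum_mul_norm_sub_smul_one_sq {ι R : Type*} [Fintype ι] [DecidableEq ι]
    [SeminormedRing R] (M : Matrix ι ι ℝ) (A : Matrix ι ι R) (c : R) :
    ∑ i, ∑ j, M i j * ‖(A - c • (1 : Matrix ι ι R)) i j‖ ^ 2 =
      ∑ i, ∑ j, M i j * ‖A i j‖ ^ 2
        + (∑ i, M i i * ‖A i i - c‖ ^ 2 - ∑ i, M i i * ‖A i i‖ ^ 2) := by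
  have entry (i j) : M i j * ‖(A - c • (1 : Matrix ι ι R)) i j‖ ^ 2 = M i j * ‖A i j‖ ^ 2 +
      if i = j then M i i * ‖A i i - c‖ ^ 2 - M i i * ‖A i i‖ ^ 2 else 0 := by
    obtain rfl | hij := eq_or_ne i j
    · simp
    · simp [hij]
  simp only [entry, sum_add_distrib, sum_ite_eq, mem_univ, if_true, sum_sub_distrib]

section QVariance

variable {ι 𝕜 : Type*} [Fintype ι] [RCLike 𝕜]

/-- `Tr(DA)` for the diagonal matrix `D` with the same diagonal as `M`. The weights are read off the
diagonal of `M` because a mean satisfies `M_g(λ, λ) = λ`. -/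
def weightedTrace (M : Matrix ι ι ℝ) (A : Matrix ι ι 𝕜) : 𝕜 := ∑ i, M i i • A i i

/-- The quantum covariance `qCov(A, A)`, for an arbitrary matrix `M` in place of the means
`M_g(λᵢ, λⱼ)`. The norm on the last term makes it meaningful for `A` that are not self-adjoint. -/
def qVariance (M : Matrix ι ι ℝ) (A : Matrix ι ι 𝕜) : ℝ :=
  ∑ i, ∑ j, M i j * ‖A i j‖ ^ 2 - ‖weightedTrace M A‖ ^ 2

theorem qVariance_eq_sum_sum_mul_norm_sub_sq [DecidableEq ι] {M : Matrix ι ι ℝ} (hM : M.trace = 1)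
    (A : Matrix ι ι 𝕜) :
    qVariance M A =
      ∑ i, ∑ j, M i j * ‖(A - weightedTrace M A • (1 : Matrix ι ι 𝕜)) i j‖ ^ 2 := by
  have diagonal : ∑ i, M i i * ‖A i i - weightedTrace M A‖ ^ 2 =
      ∑ i, M i i * ‖A i i‖ ^ 2 - ‖weightedTrace M A‖ ^ 2 :=
    sum_mul_norm_sub_sum_smul_sq univ (fun i ↦ M i i) hM (fun i ↦ A i i)
  rw [sum_sum_mul_norm_sub_smul_one_sq, diagonal, qVariance]
  ring

theorem qCov_nonneg_and_eq_zero_iff_general [DecidableEq ι] {M : Matrix ι ι ℝ}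
    (hpos : ∀ i j, 0 < M i j) (htrace : M.trace = 1) (A : Matrix ι ι 𝕜) :
    0 ≤ qVariance M A ∧ (qVariance M A = 0 ↔ A = weightedTrace M A • (1 : Matrix ι ι 𝕜)) := by
  rw [qVariance_eq_sum_sum_mul_norm_sub_sq htrace, sum_sum_mul_norm_sq_eq_zero_iff hpos,
    sub_eq_zero]
  exact ⟨sum_sum_mul_norm_sq_nonneg (fun i j ↦ (hpos i j).le) _, Iff.rfl⟩

theorem weightedTrace_eq_ofReal_of_isHermitian (M : Matrix ι ι ℝ) {A : Matrix ι ι 𝕜}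
    (hA : A.IsHermitian) :
    weightedTrace M A = ((∑ i, M i i * RCLike.re (A i i) : ℝ) : 𝕜) := by
  simp only [weightedTrace, RCLike.real_smul_eq_coe_mul, RCLike.ofReal_sum, RCLike.ofReal_mul,
    hA.coe_re_apply_self]

theorem qVariance_of_isHermitian (M : Matrix ι ι ℝ) {A : Matrix ι ι 𝕜} (hA : A.IsHermitian) :
    qVariance M A =
      ∑ i, ∑ j, M i j * ‖A i j‖ ^ 2 - (∑ i, M i i * RCLike.re (A i i)) ^ 2 := by
  rw [qVariance, weightedTrace_eq_ofReal_of_isHermitian M hA, RCLike.norm_ofReal, sq_abs]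

end QVariance

section MeanMatrix

variable {ι : Type*} {g : ℝ → ℝ} {lam : ι → ℝ}

theorem Mmean_pos (hg : ∀ t, 0 < t → 0 < g t) {a b : ℝ} (ha : 0 < a) (hb : 0 < b) :
    0 < Mmean g a b :=
  mul_pos hb (hg _ (div_pos ha hb))

theorem Mmean_self (hg : g 1 = 1) {a : ℝ} (ha : a ≠ 0) : Mmean g a a = a := by
  rw [Mmean, div_self ha, hg, mul_one]

/-- The matrix of the means `M_g(λᵢ, λⱼ)`, which weights the entries of `A` in `qCov(A, A)`. -/
def meanMatrix (g : ℝ → ℝ) (lam : ι → ℝ) : Matrix ι ι ℝ :=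
  .of fun i j ↦ Mmean g (lam i) (lam j)

theorem meanMatrix_apply (g : ℝ → ℝ) (lam : ι → ℝ) (i j : ι) :
    meanMatrix g lam i j = Mmean g (lam i) (lam j) :=
  rfl

theorem meanMatrix_pos (hg : ∀ t, 0 < t → 0 < g t) (hlam : ∀ i, 0 < lam i) (i j : ι) :
    0 < meanMatrix g lam i j :=
  Mmean_pos hg (hlam i) (hlam j)

theorem diag_meanMatrix (hg : g 1 = 1) (hlam : ∀ i, lam i ≠ 0) :
    (meanMatrix g lam).diag = lam :=
  funext fun i ↦ Mmean_self hg (hlam i)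

variable {𝕜 : Type*} [Fintype ι] [RCLike 𝕜]

theorem trace_meanMatrix (hg : g 1 = 1) (hlam : ∀ i, lam i ≠ 0) :
    (meanMatrix g lam).trace = ∑ i, lam i := by
  rw [Matrix.trace, diag_meanMatrix hg hlam]

theorem weightedTrace_meanMatrix (hg : g 1 = 1) (hlam : ∀ i, lam i ≠ 0) (A : Matrix ι ι 𝕜) :
    weightedTrace (meanMatrix g lam) A = ∑ i, lam i • A i i :=
  sum_congr rfl fun i _ ↦ congrArg (· • A i i) (congrFun (diag_meanMatrix hg hlam) i)

theorem qVariance_meanMatrix (hg : g 1 = 1) (hlam : ∀ i, lam i ≠ 0) {A : Matrix ι ι 𝕜}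
    (hA : A.IsHermitian) :
    qVariance (meanMatrix g lam) A =
      ∑ i, ∑ j, Mmean g (lam i) (lam j) * ‖A i j‖ ^ 2
        - (∑ i, lam i * RCLike.re (A i i)) ^ 2 := by
  simp only [qVariance_of_isHermitian _ hA, meanMatrix_apply, Mmean_self hg (hlam _)]

end MeanMatrix

theorem qCov_nonneg_and_eq_zero_iff
    {n : ℕ} (g : ℝ → ℝ) (hg : StandardType g)
    (lam : Fin n → ℝ) (hlam : ∀ i, 0 < lam i) (hsum : ∑ i, lam i = 1)
    (A : Matrix (Fin n) (Fin n) ℂ) (hA : A.IsHermitian) :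
    0 ≤ (∑ i, ∑ j, Mmean g (lam i) (lam j) * ‖A i j‖ ^ 2)
        - (∑ i, lam i * (A i i).re) ^ 2 ∧
    ((∑ i, ∑ j, Mmean g (lam i) (lam j) * ‖A i j‖ ^ 2)
        - (∑ i, lam i * (A i i).re) ^ 2 = 0 ↔
      A = (∑ i, (lam i : ℂ) * A i i) • (1 : Matrix (Fin n) (Fin n) ℂ)) := by
  obtain ⟨-, -, -, hpos, hone, -⟩ := hg
  have lam_ne (i) : lam i ≠ 0 := (hlam i).ne'
  have trace_eq_one : (meanMatrix g lam).trace = 1 := (trace_meanMatrix hone lam_ne).trans hsum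
  simpa only [qVariance_meanMatrix hone lam_ne hA, weightedTrace_meanMatrix hone lam_ne,
    Complex.real_smul, RCLike.re_eq_complex_re] using
    qCov_nonneg_and_eq_zero_iff_general (meanMatrix_pos hpos hlam) trace_eq_one A
end
end

section
/- Let g : (0,∞) → ℝ be a standard-type function with g(0) := lim_{t→0+} g(t) ≥ 1/2. Then g(t) = (1+t)/2 for all t > 0. In other words, the only standard-type function g satisfying g(0) ≥ 1/2 is the arithmetic-mean function g(t) = (t+1)/2. -/
open scoped BigOperators

noncomputable section

/-!
Concavity and the symmetry `g t = t * g t⁻¹` pinch `g` between two bounds. Since `1` is the weighted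
mean of `t` and `t⁻¹` with weights `1 : t`, Jensen's inequality gives
`2 * g t = g t + t * g t⁻¹ ≤ (1 + t) * g 1`. Conversely, on `(0, 1]` the graph of `g` lies above the
chord from `(0, g(0+))` to `(1, g 1)`, which for `g(0+) ≥ g 1 / 2` lies above the line
`t ↦ (1 + t) / 2 * g 1`; the symmetry carries this lower bound over to `[1, ∞)`.
-/

open Set Filter Topology

section Concave

variable {𝕜 E β : Type*} [Field 𝕜] [LinearOrder 𝕜] [IsStrictOrderedRing 𝕜]

theorem smul_add_smul_le_of_concaveOn [AddCommMonoid E] [Module 𝕜 E]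
    [AddCommMonoid β] [PartialOrder β] [Module 𝕜 β] [PosSMulMono 𝕜 β]
    {s : Set E} {f : E → β} (hf : ConcaveOn 𝕜 s f) {x y z : E} (hx : x ∈ s) (hy : y ∈ s)
    {a b : 𝕜} (ha : 0 ≤ a) (hb : 0 ≤ b) (hab : 0 < a + b) (hz : a • x + b • y = (a + b) • z) :
    a • f x + b • f y ≤ (a + b) • f z := by
  have z_eq : (a / (a + b)) • x + (b / (a + b)) • y = z := by
    rw [div_eq_inv_mul, div_eq_inv_mul, mul_smul, mul_smul, ← smul_add, hz,
      inv_smul_smul₀ hab.ne']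
  have jensen : (a / (a + b)) • f x + (b / (a + b)) • f y ≤ f z :=
    z_eq ▸ (concaveOn_iff_div.1 hf).2 hx hy ha hb hab
  calc a • f x + b • f y
      = (a + b) • ((a / (a + b)) • f x + (b / (a + b)) • f y) := by
        rw [smul_add, smul_smul, smul_smul, mul_div_cancel₀ _ hab.ne', mul_div_cancel₀ _ hab.ne']
    _ ≤ (a + b) • f z := smul_le_smul_of_nonneg_left jensen hab.le

theorem chord_le_of_concaveOn_of_tendsto_nhdsGT [TopologicalSpace 𝕜] [OrderTopology 𝕜]
    [AddCommMonoid β] [PartialOrder β] [Module 𝕜 β] [PosSMulMono 𝕜 β]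
    [TopologicalSpace β] [OrderClosedTopology β] [ContinuousAdd β] [ContinuousSMul 𝕜 β]
    {f : 𝕜 → β} {a b t : 𝕜} {l : β} (hf : ConcaveOn 𝕜 (Ioc a b) f)
    (hl : Tendsto f (𝓝[>] a) (𝓝 l)) (ht : t ∈ Ioc a b) :
    (b - t) • l + (t - a) • f b ≤ (b - a) • f t := by
  have tendsto_sub (c : 𝕜) : Tendsto (fun s ↦ c - s) (𝓝[>] a) (𝓝 (c - a)) :=
    (tendsto_const_nhds.sub tendsto_id).mono_left nhdsWithin_le_nhds
  refine le_of_tendsto_of_tendsto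
    ((hl.const_smul (b - t)).add ((tendsto_sub t).smul_const (f b)))
    ((tendsto_sub b).smul_const (f t)) ?_
  filter_upwards [Ioo_mem_nhdsGT ht.1] with s hs
  have hsb : s < b := hs.2.trans_le ht.2
  have weights : b - t + (t - s) = b - s := sub_add_sub_cancel b t s
  rw [← weights]
  exact smul_add_smul_le_of_concaveOn hf ⟨hs.1, hsb.le⟩ ⟨ht.1.trans_le ht.2, le_rfl⟩
    (sub_nonneg.2 ht.2) (sub_nonneg.2 hs.2.le) (weights ▸ sub_pos.2 hsb)
    (by simp only [smul_eq_mul]; ring)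

end Concave

section Symmetric

variable {𝕜 β : Type*} [Field 𝕜] [LinearOrder 𝕜] [IsStrictOrderedRing 𝕜]
  [AddCommGroup β] [PartialOrder β] [Module 𝕜 β] [PosSMulMono 𝕜 β] {g : 𝕜 → β} {t : 𝕜}

theorem le_arith_smul_of_concaveOn_of_symm (hg : ConcaveOn 𝕜 (Ioi 0) g) (ht : 0 < t)
    (hsymm : g t = t • g t⁻¹) : g t ≤ ((1 + t) / 2) • g 1 := by
  have jensen : (1 : 𝕜) • g t + t • g t⁻¹ ≤ (1 + t) • g 1 :=
    smul_add_smul_le_of_concaveOn hg ht (inv_pos.2 ht) zero_le_one ht.le (by positivity)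
      (by simp only [smul_eq_mul]; field_simp; ring)
  calc g t = (1 / 2 : 𝕜) • ((1 : 𝕜) • g t + t • g t⁻¹) := by rw [← hsymm]; module
    _ ≤ (1 / 2 : 𝕜) • (1 + t) • g 1 := smul_le_smul_of_nonneg_left jensen (by positivity)
    _ = ((1 + t) / 2) • g 1 := by module

variable [TopologicalSpace 𝕜] [OrderTopology 𝕜] [IsOrderedAddMonoid β]
  [TopologicalSpace β] [OrderClosedTopology β] [ContinuousAdd β] [ContinuousSMul 𝕜 β] {g0 : β}

theorem arith_smul_le_of_concaveOn_Ioc (hg : ConcaveOn 𝕜 (Ioc 0 1) g)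
    (hg0 : Tendsto g (𝓝[>] 0) (𝓝 g0)) (hhalf : (1 / 2 : 𝕜) • g 1 ≤ g0) (ht : t ∈ Ioc 0 1) :
    ((1 + t) / 2) • g 1 ≤ g t := by
  calc ((1 + t) / 2) • g 1 = (1 - t) • (1 / 2 : 𝕜) • g 1 + t • g 1 := by module
    _ ≤ (1 - t) • g0 + t • g 1 := by gcongr; exact sub_nonneg.2 ht.2
    _ ≤ g t := by
      simpa only [sub_zero, one_smul] using chord_le_of_concaveOn_of_tendsto_nhdsGT hg hg0 ht

theorem standard_g0_ge_half_eq_arith_general (hg : ConcaveOn 𝕜 (Ioi 0) g)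
    (hsymm : ∀ t, 0 < t → g t = t • g t⁻¹) (hg0 : Tendsto g (𝓝[>] 0) (𝓝 g0))
    (hhalf : (1 / 2 : 𝕜) • g 1 ≤ g0) (ht : 0 < t) :
    g t = ((1 + t) / 2) • g 1 := by
  refine le_antisymm (le_arith_smul_of_concaveOn_of_symm hg ht (hsymm t ht)) ?_
  have lower {s : 𝕜} (hs : s ∈ Ioc 0 1) : ((1 + s) / 2) • g 1 ≤ g s :=
    arith_smul_le_of_concaveOn_Ioc (hg.subset Ioc_subset_Ioi_self (convex_Ioc 0 1)) hg0 hhalf hs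
  rcases le_total t 1 with ht1 | ht1
  · exact lower ⟨ht, ht1⟩
  · calc ((1 + t) / 2) • g 1 = t • ((1 + t⁻¹) / 2) • g 1 := by
          rw [smul_smul]; congr 1; field_simp; ring
      _ ≤ t • g t⁻¹ :=
          smul_le_smul_of_nonneg_left (lower ⟨inv_pos.2 ht, inv_le_one_of_one_le₀ ht1⟩) ht.le
      _ = g t := (hsymm t ht).symm

end Symmetric

theorem standard_g0_ge_half_eq_arith
    (g : ℝ → ℝ) (hg : StandardType g) (g0 : ℝ)
    (hg0 : Filter.Tendsto g (nhdsWithin 0 (Set.Ioi 0)) (nhds g0))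
    (hg0half : g0 ≥ 1 / 2) :
    ∀ t : ℝ, 0 < t → g t = (1 + t) / 2 := by
  obtain ⟨-, -, hconc, -, h1, hsymm⟩ := hg
  intro t ht
  simpa [h1] using standard_g0_ge_half_eq_arith_general hconc (by simpa using hsymm) hg0
    (by simpa [h1] using hg0half) ht
end
end
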